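/- Let λ > 0, let J be a finite index set, and let (x_j)_{j∈J} and (y_j)_{j∈J} be vectors in ℝ^d such that the linear span of {x_j : j ∈ J} has dimension at most r and the linear span of {y_j : j ∈ J} has dimension at most r. Let A = λ·I_d + ∑_{j∈J} x_j x_jᵀ and B = λ·I_d + ∑_{j∈J} y_j y_jᵀ. Then for every y ∈ ℝ^d: ‖y‖²_{A⁻¹} − ‖y‖²_{B⁻¹} ≤ (2√r/√λ)·‖y‖_{A⁻¹}·‖y‖_{B⁻¹}·√(∑_{j∈J} ‖x_j − y_j‖₂²). -/

import Mathlib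

open Matrix

theorem aux_form {d : ℕ} {J : Type*} [Fintype J] (lam : ℝ) (x : J → (Fin d → ℝ))
    (w u : Fin d → ℝ) :
    w ⬝ᵥ (lam • (1 : Matrix (Fin d) (Fin d) ℝ) + ∑ j, vecMulVec (x j) (x j)).mulVec u
      = lam * (w ⬝ᵥ u) + ∑ j, (x j ⬝ᵥ w) * (x j ⬝ᵥ u) := by
  rw [Matrix.add_mulVec, dotProduct_add, Matrix.smul_mulVec, Matrix.one_mulVec, dotProduct_smul,
    smul_eq_mul, Matrix.sum_mulVec, dotProduct_sum]
  congr 1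
  refine Finset.sum_congr rfl fun j _ => ?_
  rw [Matrix.vecMulVec_mulVec]
  simp [dotProduct_smul, dotProduct_comm w (x j), mul_comm]

theorem aux_inv {d : ℕ} {J : Type*} [Fintype J] (lam : ℝ) (hlam : 0 < lam)
    (x : J → (Fin d → ℝ)) (A : Matrix (Fin d) (Fin d) ℝ)
    (hA : A = lam • (1 : Matrix (Fin d) (Fin d) ℝ) + ∑ j, vecMulVec (x j) (x j))
    (v : Fin d → ℝ) : A.mulVec (A⁻¹.mulVec v) = v := by
  have hu : IsUnit A := by
    rw [← Matrix.mulVec_injective_iff_isUnit]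
    intro p q hpq
    have h0 : A.mulVec (p - q) = 0 := by
      rw [Matrix.mulVec_sub]; exact sub_eq_zero.2 hpq
    have h1 := aux_form lam x (p - q) (p - q)
    rw [← hA, h0, dotProduct_zero] at h1
    have h2 : 0 ≤ ∑ j, (x j ⬝ᵥ (p - q)) * (x j ⬝ᵥ (p - q)) :=
      Finset.sum_nonneg fun j _ => mul_self_nonneg _
    have h3 : 0 ≤ (p - q) ⬝ᵥ (p - q) := Finset.sum_nonneg fun j _ => mul_self_nonneg _
    have h4 : (p - q) ⬝ᵥ (p - q) = 0 := by
      by_contra hne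
      have : 0 < (p - q) ⬝ᵥ (p - q) := lt_of_le_of_ne h3 (Ne.symm hne)
      have := mul_pos hlam this
      linarith
    exact sub_eq_zero.1 (dotProduct_self_eq_zero.1 h4)
  rw [Matrix.mulVec_mulVec, Matrix.mul_nonsing_inv _ ((Matrix.isUnit_iff_isUnit_det A).1 hu),
    Matrix.one_mulVec]

/-- One cross term. -/
theorem aux_cross {d : ℕ} {J : Type*} [Fintype J] (lam : ℝ) (hlam : 0 < lam)
    (z y : J → (Fin d → ℝ)) (a b : Fin d → ℝ) (P Q : ℝ)
    (hP : lam * (a ⬝ᵥ a) ≤ P) (hQ : ∑ j, (y j ⬝ᵥ b) * (y j ⬝ᵥ b) ≤ Q) :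
    ∑ j, (z j ⬝ᵥ a) * (y j ⬝ᵥ b)
      ≤ 1 / √lam * √P * √Q * √(∑ j, ∑ c, (z j c) ^ 2) := by
  have h1 := Real.sum_mul_le_sqrt_mul_sqrt Finset.univ (fun j => z j ⬝ᵥ a) (fun j => y j ⬝ᵥ b)
  have h2 : ∑ j, (z j ⬝ᵥ a) ^ 2 ≤ (P / lam) * ∑ j, ∑ c, (z j c) ^ 2 := by
    rw [Finset.mul_sum]
    refine Finset.sum_le_sum fun j _ => ?_
    have hcs := Finset.sum_mul_sq_le_sq_mul_sq Finset.univ (z j) a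
    have ha : ∑ c, a c ^ 2 ≤ P / lam := by
      rw [le_div_iff₀ hlam, mul_comm]
      simpa [dotProduct, pow_two] using hP
    have hz : 0 ≤ ∑ c, (z j c) ^ 2 := Finset.sum_nonneg fun c _ => sq_nonneg _
    calc (z j ⬝ᵥ a) ^ 2 ≤ (∑ c, (z j c) ^ 2) * ∑ c, a c ^ 2 := hcs
      _ ≤ (∑ c, (z j c) ^ 2) * (P / lam) := mul_le_mul_of_nonneg_left ha hz
      _ = _ := mul_comm _ _
  have h3 : ∑ j, (y j ⬝ᵥ b) ^ 2 ≤ Q := by simpa [pow_two] using hQ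
  have hP0 : 0 ≤ P := le_trans
    (mul_nonneg hlam.le (Finset.sum_nonneg fun j _ => mul_self_nonneg _)) hP
  calc _ ≤ _ := h1
    _ ≤ √((P / lam) * ∑ j, ∑ c, (z j c) ^ 2) * √Q := by gcongr
    _ = _ := by
      rw [Real.sqrt_mul (by positivity), Real.sqrt_div hP0]
      ring

theorem aux_zero {d : ℕ} {J : Type*} (x : J → (Fin d → ℝ))
    (hx : Module.finrank ℝ (Submodule.span ℝ (Set.range x)) ≤ 0) (j : J) : x j = 0 := by
  have h := Submodule.finrank_eq_zero.1 (Nat.le_zero.1 hx)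
  have hm : x j ∈ Submodule.span ℝ (Set.range x) := Submodule.subset_span ⟨j, rfl⟩
  rw [h] at hm
  simpa using hm

/-- with `A = λ I + ∑_{j∈J} x_j x_jᵀ` and `B = λ I + ∑_{j∈J} y_j y_jᵀ`,
both spans of dimension at most `r`, for every `y ∈ ℝ^d`:
`‖y‖²_{A⁻¹} − ‖y‖²_{B⁻¹} ≤ (2√r/√λ)‖y‖_{A⁻¹}‖y‖_{B⁻¹}√(∑_{j∈J}‖x_j − y_j‖₂²)`. -/
theorem inv_norm_sq_diff_two_matrices
    {d r : ℕ} {J : Type*} [Fintype J]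
    (lam : ℝ) (hlam : 0 < lam)
    (x y : J → (Fin d → ℝ))
    (hx : Module.finrank ℝ (Submodule.span ℝ (Set.range x)) ≤ r)
    (hy : Module.finrank ℝ (Submodule.span ℝ (Set.range y)) ≤ r)
    (A B : Matrix (Fin d) (Fin d) ℝ)
    (hA : A = lam • (1 : Matrix (Fin d) (Fin d) ℝ) + ∑ j, vecMulVec (x j) (x j))
    (hB : B = lam • (1 : Matrix (Fin d) (Fin d) ℝ) + ∑ j, vecMulVec (y j) (y j)) :
    ∀ v : Fin d → ℝ,
      v ⬝ᵥ A⁻¹.mulVec v - v ⬝ᵥ B⁻¹.mulVec v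
        ≤ (2 * Real.sqrt r / Real.sqrt lam)
            * Real.sqrt (v ⬝ᵥ A⁻¹.mulVec v) * Real.sqrt (v ⬝ᵥ B⁻¹.mulVec v)
            * Real.sqrt (∑ j, ∑ c, (x j c - y j c) ^ 2) := by
  intro v
  rcases Nat.eq_zero_or_pos r with hr | hr
  · subst hr
    have hAB : A = B := by
      rw [hA, hB]
      simp [aux_zero x hx, aux_zero y hy]
    rw [hAB]
    simp
  have hAa := aux_inv lam hlam x A hA v
  have hBb := aux_inv lam hlam y B hB v
  set a := A⁻¹.mulVec v with ha
  set b := B⁻¹.mulVec v with hb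
  have e1 := aux_form lam x a a
  have e2 := aux_form lam x b a
  have e3 := aux_form lam y b b
  have e4 := aux_form lam y a b
  rw [← hA, hAa, dotProduct_comm] at e1 e2
  rw [← hB, hBb, dotProduct_comm] at e3 e4
  have nn : ∀ (z : J → (Fin d → ℝ)) (u : Fin d → ℝ), 0 ≤ ∑ j, (z j ⬝ᵥ u) * (z j ⬝ᵥ u) :=
    fun z u => Finset.sum_nonneg fun j _ => mul_self_nonneg _
  have nd : ∀ u : Fin d → ℝ, 0 ≤ lam * (u ⬝ᵥ u) :=
    fun u => mul_nonneg hlam.le (Finset.sum_nonneg fun j _ => mul_self_nonneg _)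
  have c1 := aux_cross lam hlam (fun j => y j - x j) y a b (v ⬝ᵥ a) (v ⬝ᵥ b)
    (by linarith [nn x a]) (by linarith [nd b])
  have c2 := aux_cross lam hlam (fun j => y j - x j) x b a (v ⬝ᵥ b) (v ⬝ᵥ a)
    (by linarith [nn y b]) (by linarith [nd a])
  have hD : ∑ j, ∑ c, ((y j - x j) c) ^ 2 = ∑ j, ∑ c, (x j c - y j c) ^ 2 := by
    refine Finset.sum_congr rfl fun j _ => Finset.sum_congr rfl fun c _ => ?_
    rw [Pi.sub_apply]; ring
  rw [hD] at c1 c2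
  have key : v ⬝ᵥ a - v ⬝ᵥ b = ∑ j, ((y j - x j) ⬝ᵥ a) * (y j ⬝ᵥ b)
      + ∑ j, ((y j - x j) ⬝ᵥ b) * (x j ⬝ᵥ a) := by
    rw [e4, e2, dotProduct_comm b a, add_sub_add_left_eq_sub, ← Finset.sum_sub_distrib,
      ← Finset.sum_add_distrib]
    refine Finset.sum_congr rfl fun j _ => ?_
    rw [sub_dotProduct, sub_dotProduct]; ring
  have hr1 : (1 : ℝ) ≤ √(r : ℝ) := by
    rw [Real.one_le_sqrt]; exact_mod_cast hr
  have hT : 0 ≤ 1 / √lam * √(v ⬝ᵥ a) * √(v ⬝ᵥ b) * √(∑ j, ∑ c, (x j c - y j c) ^ 2) := by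
    positivity
  calc v ⬝ᵥ a - v ⬝ᵥ b
      ≤ 2 * (1 / √lam * √(v ⬝ᵥ a) * √(v ⬝ᵥ b) * √(∑ j, ∑ c, (x j c - y j c) ^ 2)) := by
        rw [key]; linarith
    _ ≤ 2 * √(r : ℝ) * (1 / √lam * √(v ⬝ᵥ a) * √(v ⬝ᵥ b)
          * √(∑ j, ∑ c, (x j c - y j c) ^ 2)) := by
        apply mul_le_mul_of_nonneg_right _ hT; linarith
    _ = _ := by ring
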